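/- Let Γ be a finite group, x ≥ 2, y ≥ 1, and let (f,c) be a morphism of OS_Γ from 1+y to x (so f : [1+y] → [x] is an ordered surjection and c : [1+y] → Γ); note that f(1) = 1. Set z = x−1 if f⁻¹(1) = {1}, and z = x otherwise. Then there exist morphisms (f₁,c₁) : 1+z → x and (f₂,c₂) : y → z of OS_Γ with (f,c) = (f₁,c₁) ∘ (𝕀⊙(f₂,c₂)). Moreover, if f⁻¹(1) ≠ {1} there is no such factorization with z replaced by x−1, and the ordered surjections f₁ and f₂ occurring in any such factorization (for the given z) are uniquely determined by f. -/

import Mathlib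

/-- Morphisms of `FS_Γ` from `[y]` to `[x]`: pairs `(f, c)` with `f : [y] → [x]` a surjection
and `c : [y] → Γ` an arbitrary map.  We model `[n] = {1,…,n}` by `Fin n`, so the element
`1 ∈ [1+y]` corresponds to `0 : Fin (y+1)`. -/
structure FSGHom (Γ : Type) (y x : ℕ) where
  f : Fin y → Fin x
  surj : Function.Surjective f
  c : Fin y → Γ

/-- Composition in `FS_Γ`: the composite of `(f₂,c₂) : z → y` followed by `(f₁,c₁) : y → x`
is `(f₁∘f₂, r ↦ c₁(f₂ r) · c₂ r)`. -/
def FSGcomp {Γ : Type} [Group Γ] {z y x : ℕ} (α₁ : FSGHom Γ y x) (α₂ : FSGHom Γ z y) :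
    FSGHom Γ z x :=
  ⟨α₁.f ∘ α₂.f, α₁.surj.comp α₂.surj, fun r => α₁.c (α₂.f r) * α₂.c r⟩

theorem shiftSurj {y x : ℕ} {f : Fin y → Fin x} (hf : Function.Surjective f) :
    Function.Surjective (Fin.cases 0 (fun r => (f r).succ) : Fin (y + 1) → Fin (x + 1)) := by
  intro m
  induction m using Fin.cases with
  | zero => exact ⟨0, by simp⟩
  | succ t =>
    obtain ⟨r, hr⟩ := hf t
    exact ⟨r.succ, by simp [hr]⟩

/-- The shift `𝕀 ⊙ (f,c)` of a morphism of `FS_Γ`: `(f⁺, c⁺)` where `f⁺(1) = 1`,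
`f⁺(1+r) = 1+f(r)`, `c⁺(1) = 1` and `c⁺(1+r) = c(r)`. -/
def FSGshift {Γ : Type} [Group Γ] {y x : ℕ} (α : FSGHom Γ y x) : FSGHom Γ (y + 1) (x + 1) :=
  ⟨Fin.cases 0 (fun r => (α.f r).succ), shiftSurj α.surj, Fin.cons 1 α.c⟩

/-- The fiber `f⁻¹(r)` of a surjection in `FS_Γ`, as a finset. -/
def FSGHom.fiber {Γ : Type} {y x : ℕ} (A : FSGHom Γ y x) (r : Fin x) : Finset (Fin y) :=
  Finset.univ.filter (fun i => A.f i = r)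

theorem FSGHom.fiber_nonempty {Γ : Type} {y x : ℕ} (A : FSGHom Γ y x) (r : Fin x) :
    (A.fiber r).Nonempty := by
  obtain ⟨i, hi⟩ := A.surj r
  exact ⟨i, by simp [FSGHom.fiber, hi]⟩

/-- A morphism `(f,c)` of `FS_Γ` lies in `OS_Γ` when `f` is an *ordered surjection*:
for all `r < s` in `[x]`, `min f⁻¹(r) < min f⁻¹(s)`. -/
def FSGHom.IsOrdered {Γ : Type} {y x : ℕ} (A : FSGHom Γ y x) : Prop :=
  ∀ r s : Fin x, r < s →
    (A.fiber r).min' (A.fiber_nonempty r) < (A.fiber s).min' (A.fiber_nonempty s)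

/-!
In a factorization `f = f₁ ∘ (𝕀 ⊙ f₂)` the surjection `f₂ : [y] → [z]` followed by the restriction
of `f₁` to `{2, …, 1 + z}` is the restriction of `f` to `{2, …, 1 + y}`. An ordered surjection is
determined by the partition of its domain into fibres, and every finite partition of a well-order
arises from one: number the blocks by their least elements. Hence, as soon as `z` is the number of
values of `f` on `{2, …, 1 + y}`, the map `f₂` must be the numbering of the fibres of that
restriction, and `f₁` is then forced; that it is ordered follows from `f` and `𝕀 ⊙ f₂` being
ordered. This number of values is `x - 1` or `x` according to whether `f⁻¹(1) = {1}`.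
-/

section RestrictedGrowth

variable {ι κ β : Type*}

/-- A map `f` has *restricted growth* if every value below `f j` is already attained at some index
before `j`. For surjections between finite linear orders this is the condition defining ordered
surjections, phrased without minima of fibres. -/
def IsRestrictedGrowth [LT ι] [LT κ] (f : ι → κ) : Prop :=
  ∀ ⦃j r⦄, r < f j → ∃ i < j, f i = r

namespace IsRestrictedGrowth

theorem map_bot [Preorder ι] [OrderBot ι] [PartialOrder κ] [OrderBot κ] {f : ι → κ}
    (hf : IsRestrictedGrowth f) : f ⊥ = ⊥ := by
  by_contra hne
  obtain ⟨i, hi, -⟩ := hf (bot_lt_iff_ne_bot.2 hne)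
  exact not_lt_bot hi

theorem of_comp [Preorder ι] [WellFoundedLT ι] [LinearOrder κ] [Preorder β]
    {q : κ → β} {h : ι → κ} (hqh : IsRestrictedGrowth (q ∘ h)) (hh : IsRestrictedGrowth h)
    (h_surj : Function.Surjective h) : IsRestrictedGrowth q := by
  intro t r hr
  obtain ⟨j, rfl, hj_min⟩ : ∃ j, h j = t ∧ ∀ i, h i = t → ¬ i < j :=
    wellFounded_lt.has_min (h ⁻¹' {t}) (h_surj t)
  obtain ⟨i, hij, rfl⟩ := hqh hr
  refine ⟨h i, lt_of_not_ge fun hle => ?_, rfl⟩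
  rcases hle.eq_or_lt with heq | hlt
  · exact hj_min i heq.symm hij
  · obtain ⟨k, hki, hk⟩ := hh hlt
    exact hj_min k hk (hki.trans hij)

theorem eq_of_forall_eq_iff [Preorder ι] [WellFoundedLT ι] [LinearOrder κ] {f g : ι → κ}
    (hf : IsRestrictedGrowth f) (hg : IsRestrictedGrowth g)
    (hfg : ∀ i j, f i = f j ↔ g i = g j) : f = g := by
  funext j
  induction j using WellFoundedLT.induction with
  | ind j ih =>
    rcases lt_trichotomy (f j) (g j) with hlt | heq | hgt
    · obtain ⟨i, hij, hi⟩ := hg hlt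
      exact hi.symm.trans ((hfg i j).1 ((ih i hij).trans hi))
    · exact heq
    · obtain ⟨i, hij, hi⟩ := hf hgt
      exact ((hfg i j).2 ((ih i hij).symm.trans hi)).symm.trans hi

end IsRestrictedGrowth

theorem exists_equiv_fin_isRestrictedGrowth_comp [LinearOrder ι] [WellFoundedLT ι] [Finite κ]
    {k : ι → κ} (hk : Function.Surjective k) {n : ℕ} (hn : Nat.card κ = n) :
    ∃ e : κ ≃ Fin n, IsRestrictedGrowth (e ∘ k) := by
  have exists_first (b : κ) : ∃ i, k i = b ∧ ∀ j, k j = b → i ≤ j := by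
    obtain ⟨i, hi, hi_min⟩ := wellFounded_lt.has_min (k ⁻¹' {b}) (hk b)
    exact ⟨i, hi, fun j hj => not_lt.1 (hi_min j hj)⟩
  choose first k_first first_le using exists_first
  let _ : Fintype κ := Fintype.ofFinite κ
  let _ : LinearOrder κ := .lift' first (Function.LeftInverse.injective k_first)
  let e := monoEquivOfFin κ (Nat.card_eq_fintype_card.symm.trans hn)
  refine ⟨e.symm.toEquiv, fun j r hr => ⟨first (e r), ?_, ?_⟩⟩
  · have hlt : first (e r) < first (k j) := e.lt_symm_apply.1 hr
    exact hlt.trans_le (first_le _ j rfl)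
  · simp [k_first]

theorem exists_isRestrictedGrowth_factorization [LinearOrder ι] [WellFoundedLT ι] (g : ι → β)
    [Finite (Set.range g)] {n : ℕ} (hn : (Set.range g).ncard = n) :
    ∃ (h : ι → Fin n) (p : Fin n → β),
      Function.Surjective h ∧ IsRestrictedGrowth h ∧ g = p ∘ h := by
  have hg : Function.Surjective (Set.rangeFactorization g) := Set.rangeFactorization_surjective
  obtain ⟨e, he⟩ := exists_equiv_fin_isRestrictedGrowth_comp hg hn
  refine ⟨e ∘ Set.rangeFactorization g, fun t => e.symm t, e.surjective.comp hg, he, ?_⟩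
  funext j
  simp

end RestrictedGrowth

section Tail

variable {β : Type*} {n : ℕ} {f : Fin (n + 1) → β}

theorem apply_zero_mem_range_tail_iff :
    f 0 ∈ Set.range (Fin.tail f) ↔ f ⁻¹' {f 0} ≠ {0} := by
  simp [Set.ext_iff, Fin.forall_fin_succ, Fin.tail]

theorem ncard_range_tail_add_one (hf : Function.Surjective f) (h : f ⁻¹' {f 0} = {0}) :
    (Set.range (Fin.tail f)).ncard + 1 = Nat.card β := by
  have h_notMem : f 0 ∉ Set.range (Fin.tail f) := fun hmem =>
    apply_zero_mem_range_tail_iff.1 hmem h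
  rw [← Set.ncard_insert_of_notMem h_notMem, ← Fin.range_fin_succ, hf.range_eq, Set.ncard_univ]

theorem ncard_range_tail (hf : Function.Surjective f) (h : f ⁻¹' {f 0} ≠ {0}) :
    (Set.range (Fin.tail f)).ncard = Nat.card β := by
  rw [← Set.ncard_insert_of_mem (apply_zero_mem_range_tail_iff.2 h), ← Fin.range_fin_succ,
    hf.range_eq, Set.ncard_univ]

end Tail

attribute [ext] FSGHom

namespace FSGHom

variable {Γ : Type} {x y z : ℕ}

theorem isOrdered_iff_isRestrictedGrowth {α : FSGHom Γ y x} :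
    α.IsOrdered ↔ IsRestrictedGrowth α.f := by
  have mem_fiber {i r} : i ∈ α.fiber r ↔ α.f i = r := by simp [fiber]
  constructor
  · intro h j r hr
    refine ⟨_, (h r (α.f j) hr).trans_le (Finset.min'_le _ j (mem_fiber.2 rfl)), ?_⟩
    exact mem_fiber.1 (Finset.min'_mem _ (α.fiber_nonempty r))
  · intro h r s hrs
    have hs := mem_fiber.1 (Finset.min'_mem _ (α.fiber_nonempty s))
    obtain ⟨i, hi, hir⟩ := h (hrs.trans_eq hs.symm)
    exact (Finset.min'_le _ i (mem_fiber.2 hir)).trans_lt hi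

variable [Group Γ]

theorem IsOrdered.shift {α : FSGHom Γ y x} (hα : α.IsOrdered) : (FSGshift α).IsOrdered := by
  rw [isOrdered_iff_isRestrictedGrowth] at hα ⊢
  intro j r hr
  cases j using Fin.cases with
  | zero => exact absurd hr (Fin.not_lt_zero r)
  | succ j =>
    cases r using Fin.cases with
    | zero => exact ⟨0, Fin.succ_pos j, rfl⟩
    | succ r =>
      obtain ⟨i, hij, rfl⟩ := hα (Fin.succ_lt_succ_iff.1 hr)
      exact ⟨i.succ, Fin.succ_lt_succ_iff.2 hij, rfl⟩

theorem IsOrdered.of_comp {α₁ : FSGHom Γ y x} {α₂ : FSGHom Γ z y}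
    (h : (FSGcomp α₁ α₂).IsOrdered) (h₂ : α₂.IsOrdered) : α₁.IsOrdered := by
  rw [isOrdered_iff_isRestrictedGrowth] at h h₂ ⊢
  exact .of_comp (q := α₁.f) (h := α₂.f) h h₂ α₂.surj

theorem exists_eq_comp_shift (α : FSGHom Γ (y + 1) x)
    (hz : (Set.range (Fin.tail α.f)).ncard = z) :
    ∃ (α₁ : FSGHom Γ (z + 1) x) (α₂ : FSGHom Γ y z),
      α₂.IsOrdered ∧ α = FSGcomp α₁ (FSGshift α₂) := by
  obtain ⟨h, p, h_surj, hh, hp⟩ := exists_isRestrictedGrowth_factorization (Fin.tail α.f) hz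
  let α₂ : FSGHom Γ y z := ⟨h, h_surj, Fin.tail α.c⟩
  have hf : α.f = Fin.cons (α.f 0) p ∘ (FSGshift α₂).f := by
    funext i
    cases i using Fin.cases with
    | zero => rfl
    | succ r => exact congrFun hp r
  have hc : α.c = fun i =>
      (Fin.cons (α.c 0) 1 : Fin (z + 1) → Γ) ((FSGshift α₂).f i) * (FSGshift α₂).c i := by
    funext i
    cases i using Fin.cases with
    | zero => exact (mul_one _).symm
    | succ r => exact (one_mul _).symm
  let α₁ : FSGHom Γ (z + 1) x :=
    ⟨Fin.cons (α.f 0) p, .of_comp (hf ▸ α.surj), Fin.cons (α.c 0) 1⟩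
  exact ⟨α₁, α₂, isOrdered_iff_isRestrictedGrowth.2 hh, FSGHom.ext hf hc⟩

theorem tail_comp_shift (α₁ : FSGHom Γ (z + 1) x) (α₂ : FSGHom Γ y z) :
    Fin.tail (FSGcomp α₁ (FSGshift α₂)).f = Fin.tail α₁.f ∘ α₂.f :=
  rfl

theorem range_tail_comp_shift (α₁ : FSGHom Γ (z + 1) x) (α₂ : FSGHom Γ y z) :
    Set.range (Fin.tail (FSGcomp α₁ (FSGshift α₂)).f) = Set.range (Fin.tail α₁.f) := by
  rw [tail_comp_shift, α₂.surj.range_comp]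

theorem ncard_range_tail_comp_shift_le (α₁ : FSGHom Γ (z + 1) x) (α₂ : FSGHom Γ y z) :
    (Set.range (Fin.tail (FSGcomp α₁ (FSGshift α₂)).f)).ncard ≤ z := by
  rw [range_tail_comp_shift]
  exact (Finite.card_range_le _).trans_eq (Nat.card_fin z)

theorem tail_injective_of_ncard_range_tail_comp_shift {α₁ : FSGHom Γ (z + 1) x}
    {α₂ : FSGHom Γ y z} (hz : (Set.range (Fin.tail (FSGcomp α₁ (FSGshift α₂)).f)).ncard = z) :
    Function.Injective (Fin.tail α₁.f) := by
  rw [range_tail_comp_shift, ← Set.image_univ] at hz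
  rw [← Set.injOn_univ, ← Set.ncard_image_iff, hz, Set.ncard_univ, Nat.card_fin]

theorem f_eq_of_comp_shift_eq {α₁ β₁ : FSGHom Γ (z + 1) x} {α₂ β₂ : FSGHom Γ y z}
    (hz : (Set.range (Fin.tail (FSGcomp α₁ (FSGshift α₂)).f)).ncard = z)
    (hα₂ : α₂.IsOrdered) (hβ₂ : β₂.IsOrdered)
    (h : FSGcomp α₁ (FSGshift α₂) = FSGcomp β₁ (FSGshift β₂)) :
    α₁.f = β₁.f ∧ α₂.f = β₂.f := by
  have hα₁ := tail_injective_of_ncard_range_tail_comp_shift hz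
  have hβ₁ := tail_injective_of_ncard_range_tail_comp_shift (h ▸ hz)
  have h_head : α₁.f 0 = β₁.f 0 := congrArg (fun γ => γ.f 0) h
  have h_tail : Fin.tail α₁.f ∘ α₂.f = Fin.tail β₁.f ∘ β₂.f :=
    congrArg (fun γ : FSGHom Γ (y + 1) x => Fin.tail (α := fun _ => Fin x) γ.f) h
  have h₂ : α₂.f = β₂.f := by
    rw [isOrdered_iff_isRestrictedGrowth] at hα₂ hβ₂
    refine hα₂.eq_of_forall_eq_iff hβ₂ fun i j => ?_
    calc α₂.f i = α₂.f j
      _ ↔ (Fin.tail α₁.f ∘ α₂.f) i = (Fin.tail α₁.f ∘ α₂.f) j := hα₁.eq_iff.symm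
      _ ↔ (Fin.tail β₁.f ∘ β₂.f) i = (Fin.tail β₁.f ∘ β₂.f) j := by rw [h_tail]
      _ ↔ β₂.f i = β₂.f j := hβ₁.eq_iff
  have h₁ : Fin.tail α₁.f = Fin.tail β₁.f :=
    α₂.surj.injective_comp_right (h_tail.trans (by rw [h₂]))
  exact ⟨by rw [← Fin.cons_self_tail α₁.f, ← Fin.cons_self_tail β₁.f, h_head, h₁], h₂⟩

end FSGHom

theorem stmt11_general {Γ : Type} [Group Γ] (x y z : ℕ)
    (α : FSGHom Γ (y + 1) (x + 1)) (hα : α.IsOrdered)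
    (hz : (α.f ⁻¹' {0} = {0} → z = x) ∧ (α.f ⁻¹' {0} ≠ {0} → z = x + 1)) :
    α.f 0 = 0 ∧
    (∃ (α₁ : FSGHom Γ (z + 1) (x + 1)) (α₂ : FSGHom Γ y z),
      α₁.IsOrdered ∧ α₂.IsOrdered ∧ α = FSGcomp α₁ (FSGshift α₂)) ∧
    (α.f ⁻¹' {0} ≠ {0} →
      ¬ ∃ (α₁ : FSGHom Γ (x + 1) (x + 1)) (α₂ : FSGHom Γ y x), α = FSGcomp α₁ (FSGshift α₂)) ∧
    (∀ (α₁ α₁' : FSGHom Γ (z + 1) (x + 1)) (α₂ α₂' : FSGHom Γ y z),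
      α₂.IsOrdered → α₂'.IsOrdered →
      α = FSGcomp α₁ (FSGshift α₂) → α = FSGcomp α₁' (FSGshift α₂') →
        α₁.f = α₁'.f ∧ α₂.f = α₂'.f) := by
  have h0 : α.f 0 = 0 := (FSGHom.isOrdered_iff_isRestrictedGrowth.1 hα).map_bot
  have card_of_ne (hne : α.f ⁻¹' {0} ≠ {0}) : (Set.range (Fin.tail α.f)).ncard = x + 1 := by
    simpa using ncard_range_tail α.surj (h0.symm ▸ hne)
  have card_eq : (Set.range (Fin.tail α.f)).ncard = z := by
    by_cases h : α.f ⁻¹' {0} = {0}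
    · simpa [hz.1 h] using ncard_range_tail_add_one α.surj (h0.symm ▸ h)
    · rw [hz.2 h, card_of_ne h]
  refine ⟨h0, ?_, ?_, ?_⟩
  · obtain ⟨α₁, α₂, h₂, rfl⟩ := α.exists_eq_comp_shift card_eq
    exact ⟨α₁, α₂, hα.of_comp h₂.shift, h₂, rfl⟩
  · rintro hne ⟨α₁, α₂, rfl⟩
    have card_le := FSGHom.ncard_range_tail_comp_shift_le α₁ α₂
    rw [card_of_ne hne] at card_le
    exact Nat.not_succ_le_self x card_le
  · rintro α₁ α₁' α₂ α₂' h₂ h₂' rfl h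
    exact FSGHom.f_eq_of_comp_shift_eq card_eq h₂ h₂' h

/-- Let `Γ` be a finite group, `x ≥ 2` (the paper's `x` is our `x+2`),
`y ≥ 1` (the paper's `y` is our `y+1`), and `(f,c) : 1+y → x` a morphism of `OS_Γ`
(an `FS_Γ`-morphism whose surjection is ordered); note that `f(1) = 1`.  Set `z = x−1` if
`f⁻¹(1) = {1}` and `z = x` otherwise.  Then there is a factorization
`(f,c) = (f₁,c₁) ∘ (𝕀⊙(f₂,c₂))` with `(f₁,c₁) : 1+z → x` and `(f₂,c₂) : y → z` in `OS_Γ`;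
if `f⁻¹(1) ≠ {1}` there is no such factorization through `x−1`; and the ordered surjections
`f₁`, `f₂` in any such factorization are uniquely determined by `f`. -/
theorem stmt11 {Γ : Type} [Group Γ] [Finite Γ] (x y z : ℕ)
    (α : FSGHom Γ (y + 1 + 1) (x + 2)) (hα : α.IsOrdered)
    (hz : (α.f ⁻¹' {0} = {0} → z = x + 1) ∧ (α.f ⁻¹' {0} ≠ {0} → z = x + 2)) :
    α.f 0 = 0 ∧
    (∃ (α₁ : FSGHom Γ (z + 1) (x + 2)) (α₂ : FSGHom Γ (y + 1) z),
      α₁.IsOrdered ∧ α₂.IsOrdered ∧ α = FSGcomp α₁ (FSGshift α₂)) ∧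
    (α.f ⁻¹' {0} ≠ {0} →
      ¬ ∃ (α₁ : FSGHom Γ (x + 2) (x + 2)) (α₂ : FSGHom Γ (y + 1) (x + 1)),
        α₁.IsOrdered ∧ α₂.IsOrdered ∧ α = FSGcomp α₁ (FSGshift α₂)) ∧
    (∀ (α₁ α₁' : FSGHom Γ (z + 1) (x + 2)) (α₂ α₂' : FSGHom Γ (y + 1) z),
      α₁.IsOrdered → α₂.IsOrdered → α₁'.IsOrdered → α₂'.IsOrdered →
      α = FSGcomp α₁ (FSGshift α₂) → α = FSGcomp α₁' (FSGshift α₂') →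
        α₁.f = α₁'.f ∧ α₂.f = α₂'.f) := by
  obtain ⟨h0, h_exists, h_not, h_unique⟩ := stmt11_general (x + 1) (y + 1) z α hα hz
  exact ⟨h0, h_exists, fun hne ⟨α₁, α₂, _, _, h⟩ => h_not hne ⟨α₁, α₂, h⟩,
    fun α₁ α₁' α₂ α₂' _ h₂ _ h₂' => h_unique α₁ α₁' α₂ α₂' h₂ h₂'⟩
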